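/- Achievability of zero-error linear compression: Let x be a random vector in ℝ^m with arbitrary distribution. If n > inf{lower modified Minkowski dimension of U : U ⊆ ℝ^m, P[x ∈ U] = 1}, then for Lebesgue almost all matrices A ∈ ℝ^{n×m} there exists a Borel measurable decoder g_A : ℝ^n → ℝ^m with P[g_A(A x) ≠ x] = 0. -/

import Mathlib

open MeasureTheory Filter Set Metric Bornology Matrix Pointwise
noncomputable def coveringNumber {E : Type*} [PseudoMetricSpace E] (U : Set E) (ρ : ℝ) : ℕ :=
  sInf {k : ℕ | ∃ t : Finset E, t.card = k ∧ U ⊆ ⋃ x ∈ t, Metric.ball x ρ}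

noncomputable def lowerMinkDim {E : Type*} [PseudoMetricSpace E] (U : Set E) : ℝ :=
  liminf (fun ρ : ℝ => Real.log (coveringNumber U ρ) / Real.log (1 / ρ)) (nhdsWithin 0 (Set.Ioi 0))

noncomputable def upperMinkDim {E : Type*} [PseudoMetricSpace E] (U : Set E) : ℝ :=
  limsup (fun ρ : ℝ => Real.log (coveringNumber U ρ) / Real.log (1 / ρ)) (nhdsWithin 0 (Set.Ioi 0))

def IsDimCover {E : Type*} [PseudoMetricSpace E] [MeasurableSpace E] (U : Set E) (V : ℕ → Set E) : Prop :=
  (∀ i, (V i).Nonempty ∧ IsBounded (V i) ∧ MeasurableSet (V i)) ∧ U ⊆ ⋃ i, V i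

noncomputable def lowerModMinkDim {E : Type*} [PseudoMetricSpace E] [MeasurableSpace E] (U : Set E) : ℝ :=
  sInf {d : ℝ | ∃ V : ℕ → Set E, IsDimCover U V ∧ d = ⨆ i, lowerMinkDim (V i)}

noncomputable def upperModMinkDim {E : Type*} [PseudoMetricSpace E] [MeasurableSpace E] (U : Set E) : ℝ :=
  sInf {d : ℝ | ∃ V : ℕ → Set E, IsDimCover U V ∧ d = ⨆ i, upperMinkDim (V i)}
noncomputable def matVec {n m : ℕ} (A : Fin n → Fin m → ℝ) (x : EuclideanSpace ℝ (Fin m)) :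
    EuclideanSpace ℝ (Fin n) :=
  (EuclideanSpace.equiv (Fin n) ℝ).symm (Matrix.mulVec (Matrix.of A) (EuclideanSpace.equiv (Fin m) ℝ x))

/-- Balls in a finite-dimensional space are covered by exponentially many dyadically smaller balls. -/
lemma exists_dyadic_cover_ball (E : Type*) [NormedAddCommGroup E] [NormedSpace ℝ E]
    [FiniteDimensional ℝ E] :
    ∃ M : ℕ, 1 ≤ M ∧ ∀ (k : ℕ) (c : E) (R : ℝ), 0 < R →
      ∃ t : Finset E, t.card ≤ M ^ k ∧ ball c R ⊆ ⋃ x ∈ t, ball x (R / 2 ^ k) := by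
  classical
  have := FiniteDimensional.proper_real E
  obtain ⟨s, -, hs, hcov⟩ := (isCompact_closedBall (0 : E) 1).finite_cover_balls
    (show (0 : ℝ) < 1 / 2 by norm_num)
  lift s to Finset E using hs
  refine ⟨max s.card 1, le_max_right _ _, fun k => ?_⟩
  induction k with
  | zero => exact fun c R _ => ⟨{c}, by simp, by simp⟩
  | succ k ih =>
    intro c R hR
    have hhalf : ball c R ⊆ ⋃ y ∈ s, ball (c + R • y) (R / 2) := by
      intro z hz
      have hz1 : R⁻¹ • (z - c) ∈ closedBall (0 : E) 1 := by
        rw [mem_closedBall_zero_iff, norm_smul, Real.norm_of_nonneg (by positivity),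
          inv_mul_le_iff₀ hR, mul_one]
        exact (mem_ball_iff_norm.1 hz).le
      obtain ⟨y, hy, hzy⟩ := mem_iUnion₂.1 (hcov hz1)
      refine mem_iUnion₂.2 ⟨y, hy, ?_⟩
      rw [mem_ball_iff_norm] at hzy ⊢
      have : z - (c + R • y) = R • (R⁻¹ • (z - c) - y) := by
        rw [smul_sub, smul_inv_smul₀ hR.ne']; abel
      rw [this, norm_smul, Real.norm_of_nonneg hR.le]
      nlinarith
    choose t ht htc using fun y : E => ih (c + R • y) (R / 2) (by positivity)
    refine ⟨s.biUnion t, ?_, ?_⟩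
    · refine (Finset.card_biUnion_le_card_mul s t _ fun y _ => ht y).trans ?_
      rw [pow_succ']
      exact Nat.mul_le_mul_right _ (le_max_left _ _)
    · intro z hz
      obtain ⟨y, hy, hzy⟩ := mem_iUnion₂.1 (hhalf hz)
      obtain ⟨w, hw, hzw⟩ := mem_iUnion₂.1 (htc y hzy)
      refine mem_iUnion₂.2 ⟨w, Finset.mem_biUnion.2 ⟨y, hy, hw⟩, ?_⟩
      rwa [div_div, ← pow_succ'] at hzw

lemma coveringNumber_le_card {E : Type*} [PseudoMetricSpace E] {U : Set E} {ρ : ℝ}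
    {t : Finset E} (h : U ⊆ ⋃ x ∈ t, ball x ρ) : coveringNumber U ρ ≤ t.card :=
  Nat.sInf_le ⟨t, rfl, h⟩

lemma exists_cover_card_eq_coveringNumber {E : Type*} [PseudoMetricSpace E] [ProperSpace E]
    {U : Set E} (hU : IsBounded U) {ρ : ℝ} (hρ : 0 < ρ) :
    ∃ t : Finset E, t.card = coveringNumber U ρ ∧ U ⊆ ⋃ x ∈ t, ball x ρ := by
  obtain ⟨s, -, hs, hcov⟩ :=
    exists_finite_cover_balls_of_isCompact_closure hU.isCompact_closure hρ
  lift s to Finset E using hs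
  exact Nat.sInf_mem (s := {k : ℕ | ∃ t : Finset E, t.card = k ∧ U ⊆ ⋃ x ∈ t, ball x ρ})
    ⟨s.card, s, rfl, hcov⟩

lemma eventually_coveringNumber_ratio_nonneg {E : Type*} [PseudoMetricSpace E] (U : Set E) :
    ∀ᶠ ρ : ℝ in nhdsWithin 0 (Ioi 0),
      0 ≤ Real.log (coveringNumber U ρ) / Real.log (1 / ρ) := by
  filter_upwards [Ioo_mem_nhdsGT (zero_lt_one (α := ℝ))] with ρ hρ
  refine div_nonneg (Real.log_natCast_nonneg _) (Real.log_nonneg ?_)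
  rw [le_div_iff₀ hρ.1]
  linarith [hρ.2]

lemma tendsto_one_div_two_pow_nhdsGT :
    Tendsto (fun k : ℕ => (1 : ℝ) / 2 ^ k) atTop (nhdsWithin 0 (Ioi 0)) := by
  refine tendsto_nhdsWithin_iff.2 ⟨?_, Eventually.of_forall fun k => ?_⟩
  · simpa [one_div] using tendsto_pow_atTop_nhds_zero_of_lt_one
      (by norm_num : (0 : ℝ) ≤ 2⁻¹) (by norm_num)
  · simp

lemma exists_frequently_coveringNumber_ratio_le (E : Type*) [NormedAddCommGroup E]
    [NormedSpace ℝ E] [FiniteDimensional ℝ E] :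
    ∃ C : ℝ, ∀ U : Set E, IsBounded U → ∃ᶠ ρ : ℝ in nhdsWithin 0 (Ioi 0),
      Real.log (coveringNumber U ρ) / Real.log (1 / ρ) ≤ C := by
  obtain ⟨M, hM, hcov⟩ := exists_dyadic_cover_ball E
  have hM' : (1 : ℝ) ≤ M := by exact_mod_cast hM
  have hlogM : 0 ≤ Real.log M := Real.log_nonneg hM'
  have hlog2 : 0 < Real.log 2 := Real.log_pos (by norm_num)
  refine ⟨2 * Real.log M / Real.log 2, fun U hU => ?_⟩
  obtain ⟨R, hR⟩ := hU.subset_ball (0 : E)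
  obtain ⟨p, hp⟩ := pow_unbounded_of_one_lt R (by norm_num : (1 : ℝ) < 2)
  refine tendsto_one_div_two_pow_nhdsGT.frequently (Eventually.frequently ?_)
  filter_upwards [eventually_ge_atTop (p + 1)] with k hk
  obtain ⟨t, ht, htc⟩ := hcov (k + p) 0 (2 ^ p) (by positivity)
  have hradius : (2 : ℝ) ^ p / 2 ^ (k + p) = 1 / 2 ^ k := by
    rw [pow_add]; field_simp
  rw [hradius] at htc
  have hN : coveringNumber U (1 / 2 ^ k) ≤ M ^ (k + p) :=
    (coveringNumber_le_card ((hR.trans (ball_subset_ball hp.le)).trans htc)).trans ht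
  have hk0 : (0 : ℝ) < k := by exact_mod_cast (by omega : 0 < k)
  have hpk : (p : ℝ) ≤ k := by exact_mod_cast (by omega : p ≤ k)
  have hlogN : Real.log (coveringNumber U (1 / 2 ^ k)) ≤ (k + p) * Real.log M := by
    rcases Nat.eq_zero_or_pos (coveringNumber U (1 / 2 ^ k)) with h0 | h0
    · rw [h0]; simp only [Nat.cast_zero, Real.log_zero]; positivity
    · calc _ ≤ Real.log ((M : ℝ) ^ (k + p)) :=
            Real.log_le_log (by exact_mod_cast h0) (by exact_mod_cast hN)
        _ = _ := by rw [Real.log_pow]; push_cast; ring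
  rw [one_div_one_div, Real.log_pow, div_le_div_iff₀ (by positivity) hlog2]
  have : Real.log (coveringNumber U (1 / 2 ^ k)) ≤ 2 * k * Real.log M :=
    hlogN.trans (by gcongr; linarith)
  nlinarith

lemma bddAbove_range_lowerMinkDim {E : Type*} [NormedAddCommGroup E]
    [NormedSpace ℝ E] [FiniteDimensional ℝ E] {ι : Type*} {V : ι → Set E}
    (hV : ∀ i, IsBounded (V i)) : BddAbove (range fun i => lowerMinkDim (V i)) := by
  obtain ⟨C, hC⟩ := exists_frequently_coveringNumber_ratio_le E
  refine ⟨C, forall_mem_range.2 fun i => ?_⟩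
  exact liminf_le_of_frequently_le (hC _ (hV i))
    ⟨0, eventually_map.2 (eventually_coveringNumber_ratio_nonneg _)⟩

lemma frequently_coveringNumber_le_rpow {E : Type*} [NormedAddCommGroup E]
    [NormedSpace ℝ E] [FiniteDimensional ℝ E] {U : Set E} (hU : IsBounded U) {s : ℝ}
    (hs : lowerMinkDim U < s) :
    ∃ᶠ ρ : ℝ in nhdsWithin 0 (Ioi 0), (coveringNumber U ρ : ℝ) ≤ ρ ^ (-s) := by
  obtain ⟨C, hC⟩ := exists_frequently_coveringNumber_ratio_le E
  have hfreq := frequently_lt_of_liminf_lt (IsCobounded.of_frequently_le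
    (frequently_map.2 (hC U hU))) hs
  refine (hfreq.and_eventually (Ioo_mem_nhdsGT (zero_lt_one (α := ℝ)))).mono ?_
  rintro ρ ⟨hlt, hρ0, hρ1⟩
  rcases Nat.eq_zero_or_pos (coveringNumber U ρ) with h0 | h0
  · rw [h0]; simp only [Nat.cast_zero]; positivity
  · have hlog : 0 < Real.log (1 / ρ) := Real.log_pos (by rwa [lt_div_iff₀ hρ0, one_mul])
    rw [div_lt_iff₀ hlog] at hlt
    rw [← Real.log_le_log_iff (by exact_mod_cast h0) (by positivity), Real.log_rpow hρ0]
    rw [one_div, Real.log_inv] at hlt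
    linarith

lemma volume_slab_le {m : ℕ} (v : Fin m → ℝ) (j : Fin m) {ε : ℝ} (hε : 0 < ε)
    (hv : ε ≤ |v j|) {r δ : ℝ} (hr : 0 ≤ r) (hδ : 0 ≤ δ) :
    volume {a : Fin m → ℝ | (∀ k, |a k| ≤ r) ∧ |a ⬝ᵥ v| ≤ δ} ≤
      ENNReal.ofReal (ε⁻¹ * (2 * δ * (2 * r) ^ (m - 1))) := by
  let B : Matrix (Fin m) (Fin m) ℝ := (1 : Matrix (Fin m) (Fin m) ℝ).updateRow j v
  have hdet : LinearMap.det (Matrix.toLin' B) = v j := by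
    rw [LinearMap.det_toLin', ← Matrix.cramer_transpose_apply]
    simp
  have hvj : v j ≠ 0 := fun h => by rw [h, abs_zero] at hv; linarith
  let S : Fin m → Set ℝ := Function.update (fun _ => Icc (-r) r) j (Icc (-δ) δ)
  have hsub : {a : Fin m → ℝ | (∀ k, |a k| ≤ r) ∧ |a ⬝ᵥ v| ≤ δ} ⊆
      Matrix.toLin' B ⁻¹' pi univ S := by
    rintro a ⟨ha, hav⟩ k -
    rw [Matrix.toLin'_apply]
    rcases eq_or_ne k j with rfl | hk
    · simpa [S, B, Matrix.mulVec, dotProduct_comm v, abs_le] using hav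
    · simpa [S, B, Matrix.mulVec, hk, Matrix.updateRow_ne hk, Matrix.one_apply, dotProduct,
        abs_le] using ha k
  calc _ ≤ volume (Matrix.toLin' B ⁻¹' pi univ S) := measure_mono hsub
    _ = ENNReal.ofReal |(v j)⁻¹| * ∏ k, volume (S k) := by
      rw [Measure.addHaar_preimage_linearMap _ (by rwa [hdet]), hdet, volume_pi_pi]
    _ = ENNReal.ofReal (|v j|⁻¹ * (2 * δ * (2 * r) ^ (m - 1))) := by
      have hS : ∀ k, volume (S k) =
          Function.update (fun _ => ENNReal.ofReal (2 * r)) j (ENNReal.ofReal (2 * δ)) k := by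
        intro k
        rcases eq_or_ne k j with rfl | hk
        · simp [S, two_mul]
        · simp [S, hk, two_mul]
      simp_rw [hS]
      rw [Finset.prod_update_of_mem (Finset.mem_univ j), Finset.prod_const,
        Finset.card_sdiff_of_subset (by simp), ← ENNReal.ofReal_pow (by positivity),
        ← ENNReal.ofReal_mul (by positivity), ← ENNReal.ofReal_mul (by positivity), abs_inv]
      simp
    _ ≤ _ := by gcongr

lemma volume_matrix_slab_le {m : ℕ} (n : ℕ) (v : Fin m → ℝ) (j : Fin m) {ε : ℝ} (hε : 0 < ε)
    (hv : ε ≤ |v j|) {r δ : ℝ} (hr : 0 ≤ r) (hδ : 0 ≤ δ) :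
    volume {A : Fin n → Fin m → ℝ | (∀ i k, |A i k| ≤ r) ∧ ∀ i, |A i ⬝ᵥ v| ≤ δ} ≤
      ENNReal.ofReal ((ε⁻¹ * (2 * δ * (2 * r) ^ (m - 1))) ^ n) := by
  have h : {A : Fin n → Fin m → ℝ | (∀ i k, |A i k| ≤ r) ∧ ∀ i, |A i ⬝ᵥ v| ≤ δ} =
      pi univ fun _ => {a : Fin m → ℝ | (∀ k, |a k| ≤ r) ∧ |a ⬝ᵥ v| ≤ δ} := by
    ext A
    simp [forall_and]
  rw [h, volume_pi_pi, Finset.prod_const, Finset.card_univ, Fintype.card_fin,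
    ENNReal.ofReal_pow (by positivity)]
  gcongr
  exact volume_slab_le v j hε hv hr hδ

@[simp]
lemma matVec_apply {n m : ℕ} (A : Fin n → Fin m → ℝ) (x : EuclideanSpace ℝ (Fin m)) (i : Fin n) :
    matVec A x i = A i ⬝ᵥ x.ofLp := rfl

/-- Among matrices with bounded entries, almost none identifies `x` with a point of `V` at distance
at least `ε` from `x` in the coordinate `j`. -/
lemma volume_collision_eq_zero {m n : ℕ} {V : Set (EuclideanSpace ℝ (Fin m))}
    (hV : IsBounded V) (hdim : lowerMinkDim V < n) (x : EuclideanSpace ℝ (Fin m))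
    (j : Fin m) {ε : ℝ} (hε : 0 < ε) {r : ℝ} (hr : 0 ≤ r) :
    volume {A : Fin n → Fin m → ℝ | (∀ i k, |A i k| ≤ r) ∧
      ∃ u ∈ V, ε ≤ |u j - x j| ∧ matVec A u = matVec A x} = 0 := by
  obtain ⟨s, hVs, hsn⟩ := exists_between hdim
  set C : ℝ := ε⁻¹ * (2 * (m * (r * 2)) * (2 * r) ^ (m - 1)) with hC
  have hlim : Tendsto (fun ρ : ℝ => ENNReal.ofReal (C ^ n * ρ ^ (n - s)))
      (nhdsWithin 0 (Ioi 0)) (nhds 0) := by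
    have h0 : Tendsto (fun ρ : ℝ => C ^ n * ρ ^ (n - s)) (nhds 0) (nhds 0) := by
      have := ((Real.continuous_rpow_const (sub_nonneg.2 hsn.le)).tendsto 0).const_mul (C ^ n)
      rwa [Real.zero_rpow (sub_pos.2 hsn).ne', mul_zero] at this
    simpa using ENNReal.tendsto_ofReal (h0.mono_left nhdsWithin_le_nhds)
  refine le_antisymm (ge_of_tendsto_of_frequently hlim ?_) zero_le
  refine ((frequently_coveringNumber_le_rpow hV hVs).and_eventually self_mem_nhdsWithin).mono ?_
  rintro ρ ⟨hN, hρ : 0 < ρ⟩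
  obtain ⟨t, htN, htV⟩ := exists_cover_card_eq_coveringNumber hV hρ
  let W (y : EuclideanSpace ℝ (Fin m)) : Set (Fin n → Fin m → ℝ) := {A | (∀ i k, |A i k| ≤ r) ∧
      ∃ u ∈ V, u ∈ ball y ρ ∧ ε ≤ |u j - x j| ∧ matVec A u = matVec A x}
  have hW : ∀ y, volume (W y) ≤ ENNReal.ofReal ((C * ρ) ^ n) := by
    intro y
    by_cases hy : ∃ w ∈ ball y ρ, ε ≤ |w j - x j|
    swap
    · have : W y = ∅ := by
        refine eq_empty_of_forall_notMem ?_
        rintro A ⟨-, u, -, huy, hu, -⟩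
        exact hy ⟨u, huy, hu⟩
      simp [this]
    obtain ⟨w, hwy, hw⟩ := hy
    have hCρ : C * ρ = ε⁻¹ * (2 * (m * (r * (2 * ρ))) * (2 * r) ^ (m - 1)) := by
      rw [hC]; ring
    rw [hCρ]
    refine (measure_mono ?_).trans (volume_matrix_slab_le n (w - x).ofLp j hε (by simpa using hw) hr
      (by positivity))
    rintro A ⟨hA, u, -, huy, -, hux⟩
    refine ⟨hA, fun i => ?_⟩
    have hi : A i ⬝ᵥ u.ofLp = A i ⬝ᵥ x.ofLp := by
      simpa using congrArg (fun z : EuclideanSpace ℝ (Fin n) => z i) hux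
    have hwu : ‖w - u‖ ≤ 2 * ρ := by
      have := dist_triangle_right w u y
      rw [← dist_eq_norm]
      linarith [mem_ball.1 hwy, mem_ball.1 huy]
    have : A i ⬝ᵥ (w - x).ofLp = A i ⬝ᵥ (w - u).ofLp := by
      simp [dotProduct_sub, hi]
    rw [this]
    calc |A i ⬝ᵥ (w - u).ofLp| ≤ ∑ k, |A i k * (w - u).ofLp k| := Finset.abs_sum_le_sum_abs _ _
      _ ≤ ∑ _k : Fin m, r * (2 * ρ) := by
        refine Finset.sum_le_sum fun k _ => ?_
        rw [abs_mul]
        exact mul_le_mul (hA i k) ((PiLp.norm_apply_le (w - u) k).trans hwu) (abs_nonneg _) hr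
      _ = m * (r * (2 * ρ)) := by simp
  calc _ ≤ volume (⋃ y ∈ t, W y) := by
        refine measure_mono ?_
        rintro A ⟨hA, u, hu, hux, hAu⟩
        obtain ⟨y, hy, huy⟩ := mem_iUnion₂.1 (htV hu)
        exact mem_iUnion₂.2 ⟨y, hy, hA, u, hu, huy, hux, hAu⟩
    _ ≤ ∑ y ∈ t, volume (W y) := measure_biUnion_finset_le _ _
    _ ≤ ∑ _y ∈ t, ENNReal.ofReal ((C * ρ) ^ n) := Finset.sum_le_sum fun y _ => hW y
    _ = ENNReal.ofReal (coveringNumber V ρ * (C * ρ) ^ n) := by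
      rw [Finset.sum_const, nsmul_eq_mul, htN, ENNReal.ofReal_mul (by positivity),
        ENNReal.ofReal_natCast]
    _ ≤ ENNReal.ofReal (C ^ n * ρ ^ (n - s)) := by
      refine ENNReal.ofReal_le_ofReal ?_
      have hC0 : 0 ≤ C := by positivity
      calc (coveringNumber V ρ : ℝ) * (C * ρ) ^ n ≤ ρ ^ (-s) * (C * ρ) ^ n := by gcongr
        _ = C ^ n * ρ ^ (n - s) := by
          rw [mul_pow, sub_eq_add_neg, Real.rpow_add hρ, Real.rpow_natCast]; ring

lemma ae_matVec_injective_at {m n : ℕ} {V : Set (EuclideanSpace ℝ (Fin m))}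
    (hV : IsBounded V) (hdim : lowerMinkDim V < n) (x : EuclideanSpace ℝ (Fin m)) :
    ∀ᵐ A : Fin n → Fin m → ℝ, ∀ u ∈ V, matVec A u = matVec A x → u = x := by
  have key : ∀ᵐ A : Fin n → Fin m → ℝ, ∀ (j : Fin m) (l r : ℕ),
      ¬ ((∀ i k, |A i k| ≤ (r : ℝ)) ∧
        ∃ u ∈ V, 1 / ((l : ℝ) + 1) ≤ |u j - x j| ∧ matVec A u = matVec A x) := by
    simp only [ae_all_iff]
    intro j l r
    rw [ae_iff]
    simpa only [not_not] using
      volume_collision_eq_zero (n := n) hV hdim x j (by positivity : 0 < 1 / ((l : ℝ) + 1))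
        (Nat.cast_nonneg r)
  filter_upwards [key] with A hA u hu hAu
  by_contra hne
  obtain ⟨j, hj⟩ : ∃ j, u j ≠ x j := by
    by_contra! h
    exact hne (PiLp.ext h)
  obtain ⟨l, hl⟩ := exists_nat_one_div_lt (abs_pos.2 (sub_ne_zero.2 hj))
  obtain ⟨r, hr⟩ := exists_nat_ge ‖A‖
  exact hA j l r ⟨fun i k => ((norm_le_pi_norm (A i) k).trans (norm_le_pi_norm A i)).trans hr,
    u, hu, hl.le, hAu⟩

lemma continuous_matVec {n m : ℕ} :
    Continuous fun p : (Fin n → Fin m → ℝ) × EuclideanSpace ℝ (Fin m) => matVec p.1 p.2 := by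
  refine (EuclideanSpace.equiv (Fin n) ℝ).symm.continuous.comp (Continuous.matrix_mulVec ?_ ?_)
  · exact continuous_fst
  · exact (EuclideanSpace.equiv (Fin m) ℝ).continuous.comp continuous_snd

lemma IsSigmaCompact.measurableSet {X : Type*} [TopologicalSpace X] [T2Space X]
    [MeasurableSpace X] [OpensMeasurableSpace X] {s : Set X} (hs : IsSigmaCompact s) :
    MeasurableSet s := by
  obtain ⟨K, hK, rfl⟩ := hs
  exact MeasurableSet.iUnion fun i => (hK i).measurableSet

lemma IsSigmaCompact.prod {X Y : Type*} [TopologicalSpace X] [TopologicalSpace Y]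
    {s : Set X} {t : Set Y} (hs : IsSigmaCompact s) (ht : IsSigmaCompact t) :
    IsSigmaCompact (s ×ˢ t) := by
  obtain ⟨K, hK, rfl⟩ := hs
  obtain ⟨L, hL, rfl⟩ := ht
  simp_rw [iUnion_prod_const, prod_iUnion]
  exact isSigmaCompact_iUnion _ fun i => isSigmaCompact_iUnion _ fun j =>
    ((hK i).prod (hL j)).isSigmaCompact

/-- The pairs of a point of a σ-compact set and a parameter for which another point of the set has
the same image form a σ-compact set. -/
lemma IsSigmaCompact.collisions {X Y Z : Type*} [MetricSpace X] [TopologicalSpace Y]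
    [SigmaCompactSpace Y] [TopologicalSpace Z] [T2Space Z] {f : Y × X → Z} (hf : Continuous f)
    {W : Set X} (hW : IsSigmaCompact W) :
    IsSigmaCompact {p : X × Y | p.1 ∈ W ∧ ∃ u ∈ W, f (p.2, u) = f (p.2, p.1) ∧ u ≠ p.1} := by
  let T (l : ℕ) : Set ((X × Y) × X) := ((W ×ˢ univ) ×ˢ W) ∩
    ({q | f (q.1.2, q.2) = f (q.1.2, q.1.1)} ∩ {q | 1 / ((l : ℝ) + 1) ≤ dist q.2 q.1.1})
  have hT : ∀ l, IsSigmaCompact (T l) := by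
    intro l
    obtain ⟨K, hK, hKW⟩ := (hW.prod (isSigmaCompact_univ (X := Y))).prod hW
    have hclosed : IsClosed ({q : (X × Y) × X | f (q.1.2, q.2) = f (q.1.2, q.1.1)} ∩
        {q | 1 / ((l : ℝ) + 1) ≤ dist q.2 q.1.1}) :=
      (isClosed_eq (by fun_prop) (by fun_prop)).inter
        (isClosed_le continuous_const (by fun_prop))
    refine ⟨fun i => K i ∩ _, fun i => (hK i).inter_right hclosed, ?_⟩
    rw [← iUnion_inter, hKW]
  have himage : {p : X × Y | p.1 ∈ W ∧ ∃ u ∈ W, f (p.2, u) = f (p.2, p.1) ∧ u ≠ p.1} =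
      Prod.fst '' ⋃ l, T l := by
    ext p
    constructor
    · rintro ⟨hp, u, hu, hfu, hne⟩
      obtain ⟨l, hl⟩ := exists_nat_one_div_lt (dist_pos.2 hne)
      exact ⟨(p, u), mem_iUnion.2 ⟨l, ⟨⟨hp, mem_univ _⟩, hu⟩, hfu, hl.le⟩, rfl⟩
    · rintro ⟨⟨p, u⟩, hq, rfl⟩
      obtain ⟨l, ⟨⟨hp, -⟩, hu⟩, hfu, hl⟩ := mem_iUnion.1 hq
      exact ⟨hp, u, hu, hfu, dist_pos.1 (lt_of_lt_of_le (by positivity) hl)⟩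
  rw [himage]
  exact (isSigmaCompact_iUnion _ hT).image continuous_fst

lemma MeasurableSet.exists_isSigmaCompact_ae_mem {X : Type*} [TopologicalSpace X]
    [MeasurableSpace X] [T2Space X] [OpensMeasurableSpace X] {μ : Measure X} [IsFiniteMeasure μ]
    [μ.InnerRegularCompactLTTop] {W : Set X} (hW : MeasurableSet W) (hμ : ∀ᵐ y ∂μ, y ∈ W) :
    ∃ W' ⊆ W, IsSigmaCompact W' ∧ ∀ᵐ y ∂μ, y ∈ W' := by
  choose K hKW hK hμK using fun k : ℕ => hW.exists_isCompact_sdiff_lt (measure_ne_top μ W)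
    (ENNReal.inv_ne_zero.2 (ENNReal.natCast_ne_top k))
  refine ⟨⋃ k, K k, iUnion_subset hKW, ⟨K, hK, rfl⟩, ?_⟩
  have hdiff : μ (W \ ⋃ k, K k) = 0 := by
    refine le_antisymm (ge_of_tendsto' ENNReal.tendsto_inv_nat_nhds_zero fun k => ?_) zero_le
    exact (measure_mono (sdiff_subset_sdiff_right (subset_iUnion K k))).trans (hμK k).le
  filter_upwards [hμ, measure_eq_zero_iff_ae_notMem.1 hdiff] with y hy hyK
  by_contra h
  exact hyK ⟨hy, h⟩

lemma exists_isDimCover {E : Type*} [NormedAddCommGroup E] [MeasurableSpace E]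
    [OpensMeasurableSpace E] (U : Set E) : ∃ V : ℕ → Set E, IsDimCover U V := by
  refine ⟨fun i => closedBall 0 i, fun i => ⟨⟨0, by simp⟩, isBounded_closedBall,
    measurableSet_closedBall⟩, fun y _ => ?_⟩
  obtain ⟨i, hi⟩ := exists_nat_ge ‖y‖
  exact mem_iUnion.2 ⟨i, by simpa using hi⟩

lemma exists_isDimCover_lowerMinkDim_lt {E : Type*} [NormedAddCommGroup E] [NormedSpace ℝ E]
    [FiniteDimensional ℝ E] [MeasurableSpace E] [OpensMeasurableSpace E] {U : Set E} {d : ℝ}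
    (hU : lowerModMinkDim U < d) :
    ∃ V : ℕ → Set E, IsDimCover U V ∧ ∀ i, lowerMinkDim (V i) < d := by
  obtain ⟨V₀, hV₀⟩ := exists_isDimCover U
  obtain ⟨_, ⟨V, hV, rfl⟩, hVd⟩ := exists_lt_of_csInf_lt (by exact ⟨_, V₀, hV₀, rfl⟩) hU
  exact ⟨V, hV, fun i =>
    (le_ciSup (bddAbove_range_lowerMinkDim fun i => (hV.1 i).2.1) i).trans_lt hVd⟩

theorem achievability_zero_error {m n : ℕ} {Ω : Type*} [MeasureSpace Ω]
    [IsProbabilityMeasure (volume : Measure Ω)]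
    (x : Ω → EuclideanSpace ℝ (Fin m)) (hx : Measurable x)
    (hdim : sInf {d : ℝ | ∃ U : Set (EuclideanSpace ℝ (Fin m)),
      volume (x ⁻¹' U) = 1 ∧ d = lowerModMinkDim U} < n) :
    ∀ᵐ A : Fin n → Fin m → ℝ,
      ∃ g : EuclideanSpace ℝ (Fin n) → EuclideanSpace ℝ (Fin m), Measurable g ∧
        volume {ω : Ω | g (matVec A (x ω)) ≠ x ω} = 0 := by
  obtain ⟨_, ⟨U, hxU, rfl⟩, hUn⟩ := exists_lt_of_csInf_lt (by exact ⟨_, univ, by simp, rfl⟩) hdim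
  obtain ⟨V, ⟨hV, hUV⟩, hVn⟩ := exists_isDimCover_lowerMinkDim_lt hUn
  let μ : Measure (EuclideanSpace ℝ (Fin m)) := Measure.map x volume
  have : IsProbabilityMeasure μ := Measure.isProbabilityMeasure_map hx.aemeasurable
  have hVm : MeasurableSet (⋃ i, V i) := MeasurableSet.iUnion fun i => (hV i).2.2
  have hμV : ∀ᵐ y ∂μ, y ∈ ⋃ i, V i := by
    refine (mem_ae_iff_prob_eq_one hVm).2 (le_antisymm prob_le_one ?_)
    rw [Measure.map_apply hx hVm, ← hxU]
    exact measure_mono (preimage_mono hUV)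
  obtain ⟨W, hWV, hW, hμW⟩ := hVm.exists_isSigmaCompact_ae_mem hμV
  let p (y : EuclideanSpace ℝ (Fin m)) (A : Fin n → Fin m → ℝ) : Prop :=
    ¬ (y ∈ W ∧ ∃ u ∈ W, matVec A u = matVec A y ∧ u ≠ y)
  have hp : MeasurableSet {q : EuclideanSpace ℝ (Fin m) × (Fin n → Fin m → ℝ) | p q.1 q.2} :=
    (hW.collisions continuous_matVec).measurableSet.compl
  have hae : ∀ᵐ y ∂μ, ∀ᵐ A : Fin n → Fin m → ℝ, p y A := by
    refine Eventually.of_forall fun y => ?_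
    filter_upwards [ae_all_iff.2 fun i => ae_matVec_injective_at (hV i).2.1 (hVn i) y]
    rintro A hA ⟨-, u, hu, hAu, hne⟩
    obtain ⟨i, hi⟩ := mem_iUnion.1 (hWV hu)
    exact hne (hA i u hi hAu)
  filter_upwards [(Measure.ae_ae_comm hp).1 hae] with A hA
  let G : Set (EuclideanSpace ℝ (Fin m)) := {y | y ∈ W ∧ p y A}
  have hG : MeasurableSet G := hW.measurableSet.inter (measurable_prodMk_right hp)
  have hcont : Continuous fun y => matVec A y :=
    continuous_matVec.comp (Continuous.prodMk_right A)
  have hinj : InjOn (fun y => matVec A y) G := by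
    intro y hy z hz hyz
    by_contra hne
    exact hz.2 ⟨hz.1, y, hy.1, hyz, hne⟩
  obtain ⟨g, hg, hgG⟩ := (hcont.continuousOn.measurableEmbedding hG hinj).exists_measurable_extend
    measurable_subtype_coe fun _ => ⟨0⟩
  refine ⟨g, hg, ?_⟩
  have hμg : ∀ᵐ y ∂μ, g (matVec A y) = y := by
    filter_upwards [hμW, hA] with y hyW hyA
    exact congrFun hgG ⟨y, hyW, hyA⟩
  exact ae_iff.1 (ae_of_ae_map hx.aemeasurable hμg)
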